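/- arXiv:2310.01706 — 3 statements merged into one kernel-verified Lean document; each statement's English description precedes it below -/
import Mathlib

section
/- In the n-bit parity MDP, for every initial state s ∈ {0,1}^n, the optimal value is positive if and only if the number of ones in s is even: V*(s) > 0 ⟺ ∑_{i=1}^n s_i ≡ 0 (mod 2). Equivalently, the indicator 𝟙(V*(s) > 0) equals the negation of the n-variable parity function PARITY_n(s) = ∑_{i=1}^n s_i mod 2. -/
/-!
Each action flips two bits, so the parity of the number of ones is invariant along every
trajectory (`onesCount_traj_mod_two`); as the zero string has an even number of ones, it can
only be reached from an even state. Conversely, a state with `2 * k` ones reaches the zero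
string after `k` actions (`exists_traj_eq_zeroStr`), and `2 * k ≤ n` with `1 ≤ n` gives `k < n`,
so this visit happens within the horizon. Positivity of the value is the existence of such a
visit (`parityV_pos_iff_exists`).
-/

/-- The all-false (all-zero) bit string of length `ℓ`. -/
def zeroStr (ℓ : ℕ) : Fin ℓ → Bool := fun _ => false

/-- Flip (negate) the `i`-th coordinate of the bit string `s`. -/
def flipBit {n : ℕ} (s : Fin n → Bool) (i : Fin n) : Fin n → Bool :=
  fun k => if k = i then !(s k) else s k

/-- The parity-MDP transition: action `(i, j)` flips the `i`-th bit and then the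
`j`-th bit. -/
def parityStep {n : ℕ} (s : Fin n → Bool) (a : Fin n × Fin n) : Fin n → Bool :=
  flipBit (flipBit s a.1) a.2

/-- The trajectory induced by an action sequence `a`: `parityTraj s a 0 = s` (this is
`s_1`) and `parityTraj s a t` is the state `s_{t+1}`. -/
def parityTraj {n : ℕ} (s : Fin n → Bool) (a : ℕ → Fin n × Fin n) : ℕ → (Fin n → Bool)
  | 0 => s
  | t + 1 => parityStep (parityTraj s a t) (a t)

/-- The optimal value of the `n`-bit parity MDP with horizon `H = n`: the maximal,
over action sequences, number of time steps `t ∈ {1, …, n}` with `s_t = 0_n`. -/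
noncomputable def parityV (n : ℕ) (s : Fin n → Bool) : ℕ :=
  sSup {v | ∃ a : ℕ → Fin n × Fin n,
    v = ((Finset.range n).filter fun t => parityTraj s a t = zeroStr n).card}

/-- The number of ones of a bit string, in the form used by the theorem. -/
def onesCount {n : ℕ} (s : Fin n → Bool) : ℕ := ∑ i, (if s i then 1 else 0)

theorem onesCount_eq_erase {n : ℕ} (s : Fin n → Bool) (i : Fin n) :
    onesCount s = (if s i then 1 else 0)
      + ∑ k ∈ Finset.univ.erase i, (if s k then 1 else 0) :=
  (Finset.add_sum_erase _ _ (Finset.mem_univ i)).symm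

theorem onesCount_flipBit_eq_erase {n : ℕ} (s : Fin n → Bool) (i : Fin n) :
    onesCount (flipBit s i) = (if s i then 0 else 1)
      + ∑ k ∈ Finset.univ.erase i, (if s k then 1 else 0) := by
  rw [onesCount_eq_erase _ i]
  congr 1
  · cases h : s i <;> simp [flipBit, h]
  · refine Finset.sum_congr rfl fun k hk => ?_
    simp [flipBit, Finset.ne_of_mem_erase hk]

theorem onesCount_flipBit_of_true {n : ℕ} {s : Fin n → Bool} {i : Fin n} (h : s i = true) :
    onesCount (flipBit s i) + 1 = onesCount s := by
  rw [onesCount_flipBit_eq_erase, onesCount_eq_erase s i]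
  simp [h, add_comm]

theorem onesCount_flipBit_mod_two {n : ℕ} (s : Fin n → Bool) (i : Fin n) :
    onesCount (flipBit s i) % 2 = (onesCount s + 1) % 2 := by
  rw [onesCount_flipBit_eq_erase, onesCount_eq_erase s i]
  cases s i <;> simp <;> omega

theorem onesCount_traj_mod_two {n : ℕ} (s : Fin n → Bool) (a : ℕ → Fin n × Fin n) (t : ℕ) :
    onesCount (parityTraj s a t) % 2 = onesCount s % 2 := by
  induction t with
  | zero => rfl
  | succ t ih =>
    have h1 := onesCount_flipBit_mod_two (parityTraj s a t) (a t).1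
    have h2 := onesCount_flipBit_mod_two (flipBit (parityTraj s a t) (a t).1) (a t).2
    simp only [parityTraj, parityStep]
    omega

theorem onesCount_eq_zero_iff {n : ℕ} (s : Fin n → Bool) :
    onesCount s = 0 ↔ s = zeroStr n := by
  simp [onesCount, zeroStr, funext_iff]

theorem exists_true_of_onesCount_pos {n : ℕ} {s : Fin n → Bool} (h : 0 < onesCount s) :
    ∃ i, s i = true := by
  by_contra! hs
  simp [onesCount, hs] at h

theorem onesCount_le {n : ℕ} (s : Fin n → Bool) : onesCount s ≤ n := by
  calc onesCount s ≤ ∑ _i : Fin n, 1 := Finset.sum_le_sum fun i _ => by split <;> simp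
    _ = n := by simp

theorem parityTraj_succ' {n : ℕ} (s : Fin n → Bool) (a : ℕ → Fin n × Fin n) (t : ℕ) :
    parityTraj s a (t + 1) = parityTraj (parityStep s (a 0)) (fun u => a (u + 1)) t := by
  induction t with
  | zero => rfl
  | succ t ih => rw [parityTraj, ih, parityTraj]

/-- A string with `2 * k` ones is cleared in `k` steps, each action removing two ones. The
hypothesis `0 < n` provides an action to play when there is nothing left to remove. -/
theorem exists_traj_eq_zeroStr {n : ℕ} (hn : 0 < n) (k : ℕ) (s : Fin n → Bool)
    (hs : onesCount s = 2 * k) :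
    ∃ a : ℕ → Fin n × Fin n, parityTraj s a k = zeroStr n := by
  induction k generalizing s with
  | zero => exact ⟨fun _ => (⟨0, hn⟩, ⟨0, hn⟩), (onesCount_eq_zero_iff s).1 hs⟩
  | succ k ih =>
    obtain ⟨i, hi⟩ := exists_true_of_onesCount_pos (s := s) (by omega)
    have h1 := onesCount_flipBit_of_true hi
    obtain ⟨j, hj⟩ := exists_true_of_onesCount_pos (s := flipBit s i) (by omega)
    have h2 := onesCount_flipBit_of_true hj
    obtain ⟨a, ha⟩ := ih (parityStep s (i, j)) (by simp only [parityStep]; omega)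
    refine ⟨fun t => Nat.casesOn t (i, j) a, ?_⟩
    rw [parityTraj_succ']
    exact ha

/-- The value is positive exactly when the zero string is visited within the horizon; the set
of achievable returns is bounded by `n`, so its supremum in `ℕ` is genuine. -/
theorem parityV_pos_iff_exists {n : ℕ} (s : Fin n → Bool) :
    0 < parityV n s ↔ ∃ a : ℕ → Fin n × Fin n, ∃ t < n, parityTraj s a t = zeroStr n := by
  constructor
  · intro h
    by_contra! hc
    -- Every return is then `0`, and so is the supremum, even if there were no action sequence.
    refine h.ne' (Nat.le_zero.1 (csSup_le' ?_))
    rintro v ⟨a, rfl⟩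
    rw [Nat.le_zero, Finset.card_eq_zero, Finset.filter_eq_empty_iff]
    exact fun t ht => hc a t (Finset.mem_range.1 ht)
  · rintro ⟨a, t, ht, hat⟩
    refine lt_of_lt_of_le ?_ (le_csSup ⟨n, ?_⟩ ⟨a, rfl⟩)
    · exact Finset.card_pos.2 ⟨t, by simp [ht, hat]⟩
    · rintro v ⟨b, rfl⟩
      simpa using Finset.card_filter_le (Finset.range n) _

/-- In the `n`-bit parity MDP, `V*(s) > 0` iff the number of ones of `s` is even;
equivalently, the indicator `𝟙(V*(s) > 0)` equals the negation of the parity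
function `PARITY_n(s) = (∑ i, s_i) mod 2`. -/
theorem parityV_pos_iff_even (n : ℕ) (hn : 1 ≤ n) (s : Fin n → Bool) :
    (0 < parityV n s ↔ (∑ i, (if s i then 1 else 0)) % 2 = 0) ∧
    ((if 0 < parityV n s then 1 else 0)
      = 1 - (∑ i, (if s i then 1 else 0)) % 2) := by
  have key : 0 < parityV n s ↔ (∑ i, (if s i then 1 else 0)) % 2 = 0 := by
    rw [parityV_pos_iff_exists]
    change _ ↔ onesCount s % 2 = 0
    constructor
    · rintro ⟨a, t, -, hat⟩
      rw [← onesCount_traj_mod_two s a t, (onesCount_eq_zero_iff _).2 hat]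
    · intro h
      have hle := onesCount_le s
      obtain ⟨a, ha⟩ := exists_traj_eq_zeroStr hn (onesCount s / 2) s (by omega)
      exact ⟨a, onesCount s / 2, by omega, ha⟩
  refine ⟨key, ?_⟩
  split_ifs with h
  · rw [key.1 h]
  · have := mt key.2 h
    omega
end

section
/- In the unconditioned n-bit majority MDP: for every x ∈ {0,1}^n, every T ∈ ℕ, and every action sequence (a_1, …, a_T) ∈ {0,1}^T, if the trajectory s_1 = (0_b, x), s_{t+1} = T(s_t, a_t) satisfies s_{T+1} = (1_b, s_reward), then T ≥ 2^b − 1 + d(x, s_reward). -/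
/-- The all-true (all-one) bit string of length `ℓ`. -/
def oneStr (ℓ : ℕ) : Fin ℓ → Bool := fun _ => true

/-- `f` is a control function over `{0,1}^b`: it fixes the all-one string, and the
iterates `f^(k)(0_b)` for `k = 1, …, 2^b − 1` cover exactly `{0,1}^b ∖ {0_b}`. -/
def IsControlFunc (b : ℕ) (f : (Fin b → Bool) → (Fin b → Bool)) : Prop :=
  f (oneStr b) = oneStr b ∧
    (fun k => f^[k] (zeroStr b)) '' Set.Icc 1 (2 ^ b - 1) = {v | v ≠ zeroStr b}

/-- The value of a length-`b` bit string as a most-significant-bit-first binary number. -/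
def bitVal {b : ℕ} (c : Fin b → Bool) : ℕ :=
  ∑ j : Fin b, if c j then 2 ^ (b - 1 - (j : ℕ)) else 0

/-- The Hamming distance between two bit strings. -/
def hammDist {n : ℕ} (x y : Fin n → Bool) : ℕ :=
  (Finset.univ.filter fun i => x i ≠ y i).card

/-- The transition of the unconditioned `n`-bit majority MDP (`n = 2^b − 1`):
on action `1` with nonzero control bits, flip the `val(c)`-th (1-indexed)
representation bit; otherwise apply the control function to the control bits. -/
def majStep (b : ℕ) (f : (Fin b → Bool) → (Fin b → Bool))
    (s : (Fin b → Bool) × (Fin (2 ^ b - 1) → Bool)) (a : Bool) :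
    (Fin b → Bool) × (Fin (2 ^ b - 1) → Bool) :=
  if a = true ∧ s.1 ≠ zeroStr b then
    (s.1, fun i => if (i : ℕ) + 1 = bitVal s.1 then !(s.2 i) else s.2 i)
  else (f s.1, s.2)

/-- The trajectory induced by an action sequence `a`: `majTraj b f s a 0 = s` (this is
`s_1`) and `majTraj b f s a t` is the state `s_{t+1}`. -/
def majTraj (b : ℕ) (f : (Fin b → Bool) → (Fin b → Bool))
    (s : (Fin b → Bool) × (Fin (2 ^ b - 1) → Bool)) (a : ℕ → Bool) :
    ℕ → (Fin b → Bool) × (Fin (2 ^ b - 1) → Bool)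
  | 0 => s
  | t + 1 => majStep b f (majTraj b f s a t) (a t)

/-- The optimal value of the unconditioned majority MDP with horizon `H = 2^b + n`:
the maximal, over action sequences, number of time steps `t ∈ {1, …, H}` with
`s_t = (1_b, s_reward)`. -/
noncomputable def majV (b : ℕ) (f : (Fin b → Bool) → (Fin b → Bool))
    (sr : Fin (2 ^ b - 1) → Bool)
    (s : (Fin b → Bool) × (Fin (2 ^ b - 1) → Bool)) : ℕ :=
  sSup {v | ∃ a : ℕ → Bool,
    v = ((Finset.range (2 ^ b + (2 ^ b - 1))).filter
          fun t => majTraj b f s a t = (oneStr b, sr)).card}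

theorem control_iterate_ge {b : ℕ} (hb : 1 ≤ b) {f : (Fin b → Bool) → (Fin b → Bool)}
    (hf : IsControlFunc b f) {k : ℕ} (hk : f^[k] (zeroStr b) = oneStr b) :
    2 ^ b - 1 ≤ k := by
  obtain ⟨hone, hcover⟩ := hf
  have hne : oneStr b ≠ zeroStr b := fun h => by
    simpa [oneStr, zeroStr] using congrFun h ⟨0, hb⟩
  have hk0 : 1 ≤ k := by
    rcases Nat.eq_zero_or_pos k with rfl | h
    · exact absurd hk.symm hne
    · exact h
  have hconst : ∀ j, k ≤ j → f^[j] (zeroStr b) = oneStr b := fun j hj => by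
    obtain ⟨d, rfl⟩ := Nat.exists_eq_add_of_le' hj
    rw [Function.iterate_add_apply, hk]
    exact Function.iterate_fixed hone d
  have hsub : (Finset.univ.erase (zeroStr b)) ⊆
      (Finset.Icc 1 k).image (fun j => f^[j] (zeroStr b)) := fun v hv => by
    have hv' : v ∈ {v | v ≠ zeroStr b} := Finset.ne_of_mem_erase hv
    rw [← hcover] at hv'
    obtain ⟨j, hj, rfl⟩ := hv'
    rw [Finset.mem_image]
    rcases le_total j k with hjk | hjk
    · exact ⟨j, Finset.mem_Icc.2 ⟨hj.1, hjk⟩, rfl⟩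
    · exact ⟨k, Finset.mem_Icc.2 ⟨hk0, le_rfl⟩, hk.trans (hconst j hjk).symm⟩
  have hcard := (Finset.card_le_card hsub).trans Finset.card_image_le
  simpa [Finset.card_erase_of_mem] using hcard

theorem hammDist_flip_le {n : ℕ} (x y : Fin n → Bool) (v : ℕ) :
    hammDist x (fun i => if (i : ℕ) + 1 = v then !(y i) else y i) ≤ hammDist x y + 1 := by
  unfold hammDist
  -- The flip only affects the at most one index `i` with `i + 1 = v`.
  have hone : (Finset.univ.filter fun i : Fin n => (i : ℕ) + 1 = v).card ≤ 1 := by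
    rw [Finset.card_le_one]
    intro i hi j hj
    simp only [Finset.mem_filter, Finset.mem_univ, true_and] at hi hj
    exact Fin.ext (by omega)
  refine (Finset.card_le_card (t := (Finset.univ.filter fun i => x i ≠ y i) ∪
    Finset.univ.filter fun i : Fin n => (i : ℕ) + 1 = v) fun i hi => ?_).trans
    ((Finset.card_union_le _ _).trans (by omega))
  simp only [Finset.mem_filter, Finset.mem_univ, true_and, Finset.mem_union] at hi ⊢
  by_cases hv : (i : ℕ) + 1 = v
  · exact Or.inr hv
  · exact Or.inl (by simpa [hv] using hi)

/-- After `t` steps, `k` of them have advanced the control bits and the other `m` have each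
flipped at most one representation bit. -/
theorem majTraj_split (b : ℕ) (f : (Fin b → Bool) → (Fin b → Bool))
    (x : Fin (2 ^ b - 1) → Bool) (a : ℕ → Bool) (t : ℕ) :
    ∃ k m, k + m = t ∧ (majTraj b f (zeroStr b, x) a t).1 = f^[k] (zeroStr b) ∧
      hammDist x (majTraj b f (zeroStr b, x) a t).2 ≤ m := by
  induction t with
  | zero => exact ⟨0, 0, rfl, rfl, by simp [majTraj, hammDist]⟩
  | succ t ih =>
    obtain ⟨k, m, hkm, hc, hd⟩ := ih
    rw [majTraj, majStep]
    split_ifs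
    · exact ⟨k, m + 1, by omega, hc, (hammDist_flip_le _ _ _).trans (by omega)⟩
    · exact ⟨k + 1, m, by omega, by rw [Function.iterate_succ_apply', ← hc], hd⟩

/-- Lower bound on the time to reach the reward state: any action sequence whose
trajectory starting at `(0_b, x)` reaches `(1_b, s_reward)` after `T` steps
satisfies `T ≥ 2^b − 1 + d(x, s_reward)`. -/
theorem majMDP_reach_lower_bound (b : ℕ) (hb : 1 ≤ b)
    (f : (Fin b → Bool) → (Fin b → Bool)) (hf : IsControlFunc b f)
    (sr : Fin (2 ^ b - 1) → Bool) (x : Fin (2 ^ b - 1) → Bool)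
    (T : ℕ) (a : ℕ → Bool)
    (h : majTraj b f (zeroStr b, x) a T = (oneStr b, sr)) :
    2 ^ b - 1 + hammDist x sr ≤ T := by
  obtain ⟨k, m, hkm, hc, hd⟩ := majTraj_split b f x a T
  rw [h] at hc hd
  have hk := control_iterate_ge hb hf hc.symm
  dsimp only at hd
  omega
end

section
/- In the unconditioned n-bit majority MDP: for every x ∈ {0,1}^n there exists an action sequence (a_1, …, a_T) ∈ {0,1}^T of length exactly T = 2^b − 1 + d(x, s_reward) whose induced trajectory s_1 = (0_b, x), s_{t+1} = T(s_t, a_t) satisfies s_{T+1} = (1_b, s_reward). -/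
/-- `t` is reachable from `s` in exactly `m` steps of the majority MDP. -/
def MajReach (b : ℕ) (f : (Fin b → Bool) → (Fin b → Bool))
    (s : (Fin b → Bool) × (Fin (2 ^ b - 1) → Bool)) (m : ℕ)
    (t : (Fin b → Bool) × (Fin (2 ^ b - 1) → Bool)) : Prop :=
  ∃ a : ℕ → Bool, majTraj b f s a m = t

/-- The state after `m` steps depends only on the first `m` actions. -/
lemma majTraj_congr (b : ℕ) (f : (Fin b → Bool) → (Fin b → Bool))
    (s : (Fin b → Bool) × (Fin (2 ^ b - 1) → Bool)) (a a' : ℕ → Bool) (m : ℕ)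
    (h : ∀ t < m, a t = a' t) : majTraj b f s a m = majTraj b f s a' m := by
  induction m with
  | zero => rfl
  | succ m ih =>
    simp only [majTraj]
    rw [ih fun t ht => h t (by omega), h m (by omega)]

lemma MajReach.step {b : ℕ} {f : (Fin b → Bool) → (Fin b → Bool)}
    {s t : (Fin b → Bool) × (Fin (2 ^ b - 1) → Bool)} {m : ℕ}
    (h : MajReach b f s m t) (a : Bool) : MajReach b f s (m + 1) (majStep b f t a) := by
  obtain ⟨u, rfl⟩ := h
  refine ⟨Function.update u m a, ?_⟩
  simp only [majTraj, Function.update_self]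
  rw [majTraj_congr b f s (Function.update u m a) u m
    fun t ht => Function.update_of_ne (by omega) _ _]

lemma bitVal_zeroStr (b : ℕ) : bitVal (zeroStr b) = 0 := by
  simp [bitVal, zeroStr]

/-- Every `m < 2^b` has a length-`b` binary expansion. -/
lemma exists_bitVal_eq (b m : ℕ) (hm : m < 2 ^ b) : ∃ c : Fin b → Bool, bitVal c = m := by
  induction b generalizing m with
  | zero => exact ⟨fun _ => false, by simp [bitVal] at *; omega⟩
  | succ b ih =>
    -- Prepending a leading bit `d` to `c` adds `d * 2^b` to the value.
    have key : ∀ (d : Bool) (c : Fin b → Bool),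
        bitVal (Fin.cons d c : Fin (b + 1) → Bool) = (if d then 2 ^ b else 0) + bitVal c := by
      intro d c
      simp only [bitVal, Fin.sum_univ_succ, Fin.cons_zero, Fin.cons_succ, Fin.val_zero,
        Fin.val_succ, Nat.add_sub_cancel, Nat.sub_zero]
      congr 1
      refine Finset.sum_congr rfl fun j _ => ?_
      rw [show b - ((j : ℕ) + 1) = b - 1 - (j : ℕ) by omega]
    rw [pow_succ] at hm
    by_cases h : 2 ^ b ≤ m
    · obtain ⟨c, hc⟩ := ih (m - 2 ^ b) (by omega)
      exact ⟨Fin.cons true c, by rw [key, hc, if_pos rfl]; omega⟩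
    · obtain ⟨c, hc⟩ := ih m (by omega)
      exact ⟨Fin.cons false c, by rw [key, hc]; simp⟩

/-- After `k` control moves, the bits addressed by the control strings visited so far can all be
made correct, at the cost of one extra step per changed bit. -/
lemma exists_partial_correction (b : ℕ) (f : (Fin b → Bool) → (Fin b → Bool))
    (sr x : Fin (2 ^ b - 1) → Bool) (k : ℕ) :
    ∃ y : Fin (2 ^ b - 1) → Bool,
      MajReach b f (zeroStr b, x) (k + hammDist x y) (f^[k] (zeroStr b), y) ∧
      (∀ i, y i = x i ∨ y i = sr i) ∧
      ∀ j ∈ Set.Icc 1 k, ∀ i : Fin (2 ^ b - 1),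
        (i : ℕ) + 1 = bitVal (f^[j] (zeroStr b)) → y i = sr i := by
  induction k with
  | zero =>
    refine ⟨x, ⟨fun _ => false, ?_⟩, fun _ => Or.inl rfl, fun j hj => ?_⟩
    · simp [hammDist, majTraj]
    · simp only [Set.mem_Icc] at hj
      omega
  | succ k ih =>
    obtain ⟨y, hreach, hor, hfix⟩ := ih
    have hmove : MajReach b f (zeroStr b, x) (k + 1 + hammDist x y)
        (f^[k + 1] (zeroStr b), y) := by
      have := hreach.step false
      simp only [majStep, Bool.false_eq_true, false_and, if_false,
        ← Function.iterate_succ_apply'] at this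
      rwa [Nat.add_right_comm]
    set c := f^[k + 1] (zeroStr b) with hc
    by_cases hbad : ∃ i : Fin (2 ^ b - 1), (i : ℕ) + 1 = bitVal c ∧ y i ≠ sr i
    · obtain ⟨i, hi, hne⟩ := hbad
      have hyx : y i = x i := (hor i).resolve_right hne
      have hc0 : c ≠ zeroStr b := by
        intro h
        rw [h, bitVal_zeroStr] at hi
        omega
      have hflip : (fun l : Fin (2 ^ b - 1) => if (l : ℕ) + 1 = bitVal c then !(y l) else y l)
          = Function.update y i (sr i) := by
        funext l
        by_cases hl : l = i
        · subst hl
          rw [if_pos hi, Function.update_self]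
          revert hne
          cases y l <;> cases sr l <;> simp
        · rw [Function.update_of_ne hl, if_neg]
          intro h
          exact hl (Fin.ext (by omega))
      -- The flip changes a coordinate on which `y` still agreed with `x`.
      have hdist : hammDist x (Function.update y i (sr i)) = hammDist x y + 1 := by
        unfold hammDist
        rw [← Finset.card_insert_of_notMem
          (s := Finset.univ.filter fun l => x l ≠ y l) (a := i) (by simp [hyx])]
        congr 1
        ext l
        by_cases hl : l = i
        · subst hl
          simpa [← hyx] using hne
        · simp [hl]
      refine ⟨Function.update y i (sr i), ?_, fun l => ?_, fun j hj l hl => ?_⟩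
      · have := hmove.step true
        simp only [majStep, true_and, if_pos hc0] at this
        rw [hflip] at this
        rwa [hdist, ← Nat.add_assoc]
      · by_cases h : l = i
        · subst h
          simp
        · simpa [h] using hor l
      · by_cases h : l = i
        · subst h
          simp
        · rw [Function.update_of_ne h]
          rcases Nat.lt_or_ge k j with hkj | hkj
          · have : j = k + 1 := le_antisymm hj.2 hkj
            subst this
            rw [← hc] at hl
            exact absurd (Fin.ext (by omega)) h
          · exact hfix j ⟨hj.1, hkj⟩ l hl
    · push Not at hbad
      refine ⟨y, hmove, hor, fun j hj l hl => ?_⟩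
      rcases Nat.lt_or_ge k j with hkj | hkj
      · have : j = k + 1 := le_antisymm hj.2 hkj
        subst this
        exact hbad l hl
      · exact hfix j ⟨hj.1, hkj⟩ l hl

/-- Reachability in exactly `T = 2^b − 1 + d(x, s_reward)` steps: there is an action
sequence whose trajectory starting at `(0_b, x)` reaches `(1_b, s_reward)` after
exactly `T` steps. -/
theorem majMDP_reach_exact (b : ℕ) (hb : 1 ≤ b)
    (f : (Fin b → Bool) → (Fin b → Bool)) (hf : IsControlFunc b f)
    (sr : Fin (2 ^ b - 1) → Bool) (x : Fin (2 ^ b - 1) → Bool) :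
    ∃ a : ℕ → Bool,
      majTraj b f (zeroStr b, x) a (2 ^ b - 1 + hammDist x sr) = (oneStr b, sr) := by
  obtain ⟨hone, himg⟩ := hf
  have hvisit : ∀ v : Fin b → Bool, v ≠ zeroStr b →
      ∃ k ∈ Set.Icc 1 (2 ^ b - 1), f^[k] (zeroStr b) = v := by
    intro v hv
    have : v ∈ {v | v ≠ zeroStr b} := hv
    rwa [← himg] at this
  have hend : f^[2 ^ b - 1] (zeroStr b) = oneStr b := by
    have h01 : oneStr b ≠ zeroStr b := fun h => by
      simpa [oneStr, zeroStr] using congrFun h ⟨0, hb⟩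
    obtain ⟨k, hk, hk1⟩ := hvisit _ h01
    rw [← Nat.sub_add_cancel hk.2, Function.iterate_add_apply, hk1,
      Function.iterate_fixed hone]
  obtain ⟨y, hreach, -, hfix⟩ := exists_partial_correction b f sr x (2 ^ b - 1)
  have hy : y = sr := by
    funext i
    obtain ⟨c, hc⟩ := exists_bitVal_eq b ((i : ℕ) + 1) (by omega)
    have hc0 : c ≠ zeroStr b := by
      rintro rfl
      rw [bitVal_zeroStr] at hc
      omega
    obtain ⟨k, hk, rfl⟩ := hvisit c hc0
    exact hfix k hk i hc.symm
  rw [hy, hend] at hreach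
  exact hreach
end
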